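/- arXiv:1810.09158 — 3 statements merged into one kernel-verified Lean document; each statement's English description precedes it below -/
import Mathlib

section
/- Let X be a set and let μ be a metric filtration on X. Then the normalization μ̃ of μ is a pseudometric on X; that is, for all x, y, z ∈ X: μ̃(x,x) = 0, μ̃(x,y) = μ̃(y,x), μ̃(x,y) ≥ 0, and μ̃(x,z) ≤ μ̃(x,y) + μ̃(y,z). -/
/-- If `μ` is a metric filtration on `X`, then its normalization
`μ̃(x,y) := μ(x,y) − min{μ(x,x), μ(y,y)}` is a pseudometric on `X`:
it vanishes on the diagonal, is symmetric, nonnegative, and satisfies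
the triangle inequality. -/
theorem stmt_1 {X : Type*} (μ : X → X → ℝ)
    (hnonneg : ∀ x y, 0 ≤ μ x y)
    (hsymm : ∀ x y, μ x y = μ y x)
    (hultra : ∀ x y z, μ x z ≤ max (μ x y) (μ y z))
    (μt : X → X → ℝ)
    (hμt : ∀ x y, μt x y = μ x y - min (μ x x) (μ y y)) :
    ∀ x y z, μt x x = 0 ∧ μt x y = μt y x ∧ 0 ≤ μt x y ∧
      μt x z ≤ μt x y + μt y z := by
  have hd : ∀ x y, μ x x ≤ μ x y := by
    intro x y
    have h := hultra x y x
    rwa [hsymm y x, max_self] at h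
  intro x y z
  have h1 := hd x y
  have h2 := hd y x
  have h3 := hd y z
  have h4 := hd z y
  have h := hultra x y z
  rw [hsymm y x] at h2
  rw [hsymm z y] at h4
  simp only [hμt]
  refine ⟨by simp, by rw [hsymm x y, min_comm], ?_, ?_⟩
  · have := min_le_left (μ x x) (μ y y)
    linarith
  · have a1 := min_le_left (μ x x) (μ y y)
    have a2 := min_le_right (μ x x) (μ y y)
    have a3 := min_le_left (μ y y) (μ z z)
    have a4 := min_le_right (μ y y) (μ z z)
    rcases le_max_iff.mp h with h | h <;>
    rcases min_choice (μ x x) (μ z z) with h' | h' <;>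
    rw [h'] <;> linarith
end

section
/- Let X be a path-connected topological space and let f : X → ℝ be continuous with f(p) ≥ 0 for all p ∈ X. For x, y ∈ X define μ(x,y) := inf{ sup_{t∈[0,1]} f(γ(t)) : γ : [0,1] → X continuous, γ(0) = x, γ(1) = y } (the infimum is over a nonempty set since X is path-connected, and each supremum is finite since [0,1] is compact and f∘γ is continuous). Then μ is a metric filtration on X: μ(x,y) ≥ 0, μ(x,y) = μ(y,x), and μ(x,z) ≤ max{μ(x,y), μ(y,z)} for all x, y, z ∈ X; moreover μ(x,x) = f(x) for every x ∈ X. -/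
/-- The supremum of `f` along a continuous path `γ` from `x` to `y`. -/
noncomputable def pathMax {X : Type*} [TopologicalSpace X] (f : X → ℝ)
    {x y : X} (γ : Path x y) : ℝ :=
  sSup (Set.range fun t => f (γ t))

/-- Let `X` be a path-connected topological space and `f : X → ℝ` continuous
and nonnegative.  Defining `μ(x,y)` as the infimum over continuous paths `γ`
from `x` to `y` of `sup_{t ∈ [0,1]} f(γ(t))`, the function `μ` is a metric
filtration on `X`: nonnegative, symmetric, satisfying the ultrametric
inequality, and with `μ(x,x) = f(x)` for every `x`. -/
theorem stmt_4 {X : Type*} [TopologicalSpace X] [PathConnectedSpace X]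
    (f : X → ℝ) (hf_cont : Continuous f) (hf : ∀ p, 0 ≤ f p)
    (μ : X → X → ℝ)
    (hμ : ∀ x y, μ x y = sInf {r : ℝ | ∃ γ : Path x y, pathMax f γ = r}) :
    (∀ x y, 0 ≤ μ x y) ∧
    (∀ x y, μ x y = μ y x) ∧
    (∀ x y z, μ x z ≤ max (μ x y) (μ y z)) ∧
    (∀ x, μ x x = f x) := by
  have bdd : ∀ {x y : X} (γ : Path x y), BddAbove (Set.range fun t => f (γ t)) :=
    fun γ => (isCompact_range (hf_cont.comp γ.continuous)).bddAbove
  have le_pm : ∀ {x y : X} (γ : Path x y) t, f (γ t) ≤ pathMax f γ :=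
    fun γ t => le_csSup (bdd γ) ⟨t, rfl⟩
  have pm_le : ∀ {x y : X} (γ : Path x y) (c : ℝ), (∀ t, f (γ t) ≤ c) → pathMax f γ ≤ c := by
    intro x y γ c h
    refine csSup_le (Set.range_nonempty _) ?_
    rintro _ ⟨t, rfl⟩
    exact h t
  have le_x : ∀ {x y : X} (γ : Path x y), f x ≤ pathMax f γ := by
    intro x y γ
    simpa using le_pm γ 0
  have ne : ∀ x y : X, {r : ℝ | ∃ γ : Path x y, pathMax f γ = r}.Nonempty :=
    fun x y => ⟨_, PathConnectedSpace.somePath x y, rfl⟩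
  have bb : ∀ x y : X, BddBelow {r : ℝ | ∃ γ : Path x y, pathMax f γ = r} := by
    intro x y
    refine ⟨f x, ?_⟩
    rintro _ ⟨γ, rfl⟩
    exact le_x γ
  have mu_le : ∀ {x y : X} (γ : Path x y), μ x y ≤ pathMax f γ := by
    intro x y γ
    rw [hμ]
    exact csInf_le (bb x y) ⟨γ, rfl⟩
  have le_mu : ∀ (x y : X) (c : ℝ), (∀ γ : Path x y, c ≤ pathMax f γ) → c ≤ μ x y := by
    intro x y c h
    rw [hμ]
    refine le_csInf (ne x y) ?_
    rintro _ ⟨γ, rfl⟩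
    exact h γ
  have mu_lt : ∀ (x y : X) (c : ℝ), μ x y < c → ∃ γ : Path x y, pathMax f γ < c := by
    intro x y c h
    by_contra! hc
    exact absurd (le_mu x y c hc) (not_le.mpr h)
  have symm_le : ∀ x y, μ x y ≤ μ y x := by
    intro x y
    refine le_mu y x _ fun γ => (mu_le γ.symm).trans (pm_le _ _ fun t => ?_)
    exact le_pm γ _
  refine ⟨fun x y => le_mu x y 0 fun γ => (hf x).trans (le_x γ),
    fun x y => le_antisymm (symm_le x y) (symm_le y x), ?_, ?_⟩
  · intro x y z
    refine le_of_forall_gt_imp_ge_of_dense fun c hc => ?_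
    obtain ⟨γ₁, h₁⟩ := mu_lt x y c ((le_max_left _ _).trans_lt hc)
    obtain ⟨γ₂, h₂⟩ := mu_lt y z c ((le_max_right _ _).trans_lt hc)
    refine (mu_le (γ₁.trans γ₂)).trans (pm_le _ _ fun t => ?_)
    rw [Path.trans_apply]
    split_ifs
    · exact (le_pm γ₁ _).trans h₁.le
    · exact (le_pm γ₂ _).trans h₂.le
  · intro x
    refine le_antisymm ((mu_le (Path.refl x)).trans (pm_le _ _ fun t => ?_))
      (le_mu x x _ fun γ => le_x γ)
    simp
end

section
/- For (i,j) ∈ ℤ × ℤ let R_{i,j} := {(m,n) ∈ ℤ × ℤ : m ≥ i and n ≥ j}; for a subset 𝒮 ⊆ ℤ × ℤ, its filtered hull is H(𝒮) := ⋃_{(i,j)∈𝒮} R_{i,j}, and 𝒮 is called a filtered shape if 𝒮 = H(𝒮). Call 𝒮 a sub-quotient shape if whenever (i,j), (m,n) ∈ 𝒮 with i ≤ m and j ≤ n, then every (p,q) with i ≤ p ≤ m and j ≤ q ≤ n also lies in 𝒮. Then: if 𝒮 is a sub-quotient shape, the set H(𝒮) \ 𝒮 is a filtered shape. -/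
/-- The upper-right quadrant `R_{i,j} = {(m,n) : m ≥ i, n ≥ j}` in `ℤ × ℤ`. -/
def Rset (i j : ℤ) : Set (ℤ × ℤ) := {p | i ≤ p.1 ∧ j ≤ p.2}

/-- The filtered hull `H(𝒮) = ⋃_{(i,j) ∈ 𝒮} R_{i,j}` of a subset of `ℤ × ℤ`. -/
def filteredHull (S : Set (ℤ × ℤ)) : Set (ℤ × ℤ) :=
  ⋃ p ∈ S, Rset p.1 p.2

/-- A subset of `ℤ × ℤ` is a filtered shape if it equals its filtered hull. -/
def IsFilteredShape (S : Set (ℤ × ℤ)) : Prop :=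
  S = filteredHull S

/-- A subset of `ℤ × ℤ` is a sub-quotient shape if whenever it contains two
comparable points, it contains the whole rectangle they span. -/
def IsSubQuotientShape (S : Set (ℤ × ℤ)) : Prop :=
  ∀ i j m n : ℤ, (i, j) ∈ S → (m, n) ∈ S → i ≤ m → j ≤ n →
    ∀ p q : ℤ, i ≤ p → p ≤ m → j ≤ q → q ≤ n → (p, q) ∈ S

/-- If `𝒮 ⊆ ℤ × ℤ` is a sub-quotient shape, then `H(𝒮) \ 𝒮` is a filtered
shape. -/
theorem stmt_8 (S : Set (ℤ × ℤ)) (hS : IsSubQuotientShape S) :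
    IsFilteredShape (filteredHull S \ S) := by
  have mem : ∀ (T : Set (ℤ × ℤ)) (x : ℤ × ℤ),
      x ∈ filteredHull T ↔ ∃ y ∈ T, y.1 ≤ x.1 ∧ y.2 ≤ x.2 := by
    intro T x
    simp only [filteredHull, Rset, Set.mem_iUnion, Set.mem_setOf_eq, exists_prop]
  unfold IsFilteredShape
  apply Set.Subset.antisymm
  · intro x hx
    exact (mem _ x).2 ⟨x, hx, le_refl _, le_refl _⟩
  · intro x hx
    obtain ⟨y, ⟨hyH, hyS⟩, h1, h2⟩ := (mem _ x).1 hx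
    obtain ⟨z, hz, h3, h4⟩ := (mem _ y).1 hyH
    refine ⟨(mem _ x).2 ⟨z, hz, h3.trans h1, h4.trans h2⟩, fun hxS => hyS ?_⟩
    exact hS z.1 z.2 x.1 x.2 hz hxS (h3.trans h1) (h4.trans h2) y.1 y.2 h3 h1 h4 h2
end
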